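/- arXiv:1403.6084 — 3 statements merged into one kernel-verified Lean document; each statement's English description precedes it below -/
import Mathlib

section
/- There exists a constant C > 0 such that for all t ≥ 0, ∫_{−π/2}^{π/2} e^{−t cos θ} cos θ dθ ≤ C/(1+t²). -/
/-!
Let `I` be the integral and put `x = t cos θ`. Integrating the derivative of
`sin θ * exp (-x) * (1 + x)` gives the exact identity
`(1 + t²) I = 2 + ∫ exp (-x) (x² - x) cos θ dθ`.
As `x² exp (-x) ≤ 2` for `x ≥ 0`, the integral on the right is at most `∫ 2 cos θ dθ = 4`.
-/

open Real

theorem pow_mul_exp_neg_le_factorial {x : ℝ} (hx : 0 ≤ x) (n : ℕ) :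
    x ^ n * exp (-x) ≤ n.factorial := by
  rw [exp_neg, ← div_eq_mul_inv, div_le_comm₀ (exp_pos x) (by positivity)]
  exact pow_div_factorial_le_exp x hx n

theorem exp_neg_mul_sq_sub_self_le_two {x : ℝ} (hx : 0 ≤ x) : exp (-x) * (x ^ 2 - x) ≤ 2 :=
  calc exp (-x) * (x ^ 2 - x) ≤ exp (-x) * x ^ 2 := by gcongr; exact sub_le_self _ hx
    _ = x ^ 2 * exp (-x) := mul_comm _ _
    _ ≤ 2 := by simpa using pow_mul_exp_neg_le_factorial hx 2

theorem hasDerivAt_sin_mul_exp_neg_mul_cos_mul_one_add (t θ : ℝ) :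
    HasDerivAt (fun θ ↦ sin θ * exp (-t * cos θ) * (1 + t * cos θ))
      ((1 + t ^ 2) * (exp (-t * cos θ) * cos θ) -
        exp (-t * cos θ) * ((t * cos θ) ^ 2 - t * cos θ) * cos θ) θ := by
  have hexp : HasDerivAt (fun θ ↦ exp (-t * cos θ)) (exp (-t * cos θ) * (-t * -sin θ)) θ :=
    ((hasDerivAt_cos θ).const_mul (-t)).exp
  have hlin : HasDerivAt (fun θ ↦ 1 + t * cos θ) (t * -sin θ) θ :=
    ((hasDerivAt_cos θ).const_mul t).const_add 1
  refine (((hasDerivAt_sin θ).mul hexp).mul hlin).congr_deriv ?_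
  simp only [Pi.mul_apply]
  linear_combination t ^ 2 * exp (-t * cos θ) * cos θ * sin_sq_add_cos_sq θ

theorem one_add_sq_mul_integral_exp_neg_mul_cos_mul_cos (t a b : ℝ) :
    (1 + t ^ 2) * ∫ θ in a..b, exp (-t * cos θ) * cos θ =
      sin b * exp (-t * cos b) * (1 + t * cos b) - sin a * exp (-t * cos a) * (1 + t * cos a) +
        ∫ θ in a..b, exp (-t * cos θ) * ((t * cos θ) ^ 2 - t * cos θ) * cos θ := by
  rw [← intervalIntegral.integral_eq_sub_of_hasDerivAt
      (fun θ _ ↦ hasDerivAt_sin_mul_exp_neg_mul_cos_mul_one_add t θ)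
      (Continuous.intervalIntegrable (by fun_prop) _ _),
    intervalIntegral.integral_sub (Continuous.intervalIntegrable (by fun_prop) _ _)
      (Continuous.intervalIntegrable (by fun_prop) _ _),
    intervalIntegral.integral_const_mul, sub_add_cancel]

theorem integral_exp_neg_mul_cos_mul_sq_sub_mul_cos_le {t : ℝ} (ht : 0 ≤ t) :
    ∫ θ in (-(π / 2))..(π / 2), exp (-t * cos θ) * ((t * cos θ) ^ 2 - t * cos θ) * cos θ ≤ 4 :=
  calc ∫ θ in (-(π / 2))..(π / 2), exp (-t * cos θ) * ((t * cos θ) ^ 2 - t * cos θ) * cos θ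
      ≤ ∫ θ in (-(π / 2))..(π / 2), 2 * cos θ := by
        refine intervalIntegral.integral_mono_on (by linarith [pi_pos])
          (Continuous.intervalIntegrable (by fun_prop) _ _)
          (Continuous.intervalIntegrable (by fun_prop) _ _) fun θ hθ ↦ ?_
        have hcos : 0 ≤ cos θ := cos_nonneg_of_mem_Icc hθ
        rw [neg_mul]
        gcongr
        exact exp_neg_mul_sq_sub_self_le_two (mul_nonneg ht hcos)
    _ = 4 := by
        rw [intervalIntegral.integral_const_mul, integral_cos, sin_neg, sin_pi_div_two]
        norm_num

/-- There is a constant `C > 0` such that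
`∫_{−π/2}^{π/2} e^{−t cos θ} cos θ dθ ≤ C/(1+t²)` for all `t ≥ 0`. -/
theorem statement_3 :
    ∃ C > (0:ℝ), ∀ t : ℝ, 0 ≤ t →
      ∫ θ in (-(π/2))..(π/2), Real.exp (-t * Real.cos θ) * Real.cos θ ≤ C / (1 + t^2) := by
  refine ⟨6, by norm_num, fun t ht ↦ ?_⟩
  rw [le_div_iff₀' (by positivity)]
  have hboundary : sin (π / 2) * exp (-t * cos (π / 2)) * (1 + t * cos (π / 2)) -
      sin (-(π / 2)) * exp (-t * cos (-(π / 2))) * (1 + t * cos (-(π / 2))) = 2 := by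
    simp only [cos_neg, sin_neg, cos_pi_div_two, sin_pi_div_two, mul_zero, exp_zero]
    norm_num
  rw [one_add_sq_mul_integral_exp_neg_mul_cos_mul_cos, hboundary]
  linarith [integral_exp_neg_mul_cos_mul_sq_sub_mul_cos_le ht]
end

section
/- Let k and j be integers with k ≥ j ≥ 1, let q = e^{2πi/k}, and let z ∈ ℂ with z^k ≠ 1. Then ∑_{s=1}^{k} q^{js}/(z − q^s) = k z^{j−1}/(z^k − 1). -/
open Complex Finset

/-!
Let `P` be a polynomial of degree less than `k`. Lagrange interpolation at the `k`-th roots of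
unity `w`, whose nodal polynomial is `X ^ k - 1` and whose weights are
`1 / (k * w ^ (k - 1)) = w / k`, reads `P(z) = (z ^ k - 1) * ∑ w, (w / k) * P(w) / (z - w)`.
The sum in question is the case `P = X ^ (j - 1)`, with the roots listed as the powers of `q`.
-/

open Polynomial (X derivative nthRootsFinset mem_nthRootsFinset)

section IsDomain

variable {R : Type*} [CommRing R] [IsDomain R] {q : R} {k : ℕ}

theorem sum_Icc_pow_eq_sum_nthRootsFinset {M : Type*} [AddCommMonoid M]
    (hq : IsPrimitiveRoot q k) (f : R → M) :
    ∑ s ∈ Icc 1 k, f (q ^ s) = ∑ w ∈ nthRootsFinset k (1 : R), f w := by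
  classical
  calc ∑ s ∈ Icc 1 k, f (q ^ s)
      = ∑ i ∈ range k, f (q ^ i * q) := by
        rw [← Ico_add_one_right_eq_Icc, sum_Ico_eq_sum_range, Nat.add_sub_cancel]
        simp only [add_comm 1, pow_succ]
    _ = ((Polynomial.nthRoots k (1 : R)).map f).sum := by
        rw [hq.nthRoots_eq hq.pow_eq_one, Multiset.map_map]
        rfl
    _ = ∑ w ∈ nthRootsFinset k (1 : R), f w := by
        rw [Polynomial.nthRootsFinset_def, Finset.sum, Multiset.toFinset_val,
          hq.nthRoots_one_nodup.dedup]

theorem nodal_nthRootsFinset_one (hk : 0 < k) (hq : IsPrimitiveRoot q k) :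
    Lagrange.nodal (nthRootsFinset k (1 : R)) id = X ^ k - 1 :=
  (Polynomial.X_pow_sub_one_eq_prod hk hq).symm

end IsDomain

section Field

variable {K : Type*} [Field K] {q w z : K} {k : ℕ}

theorem nodalWeight_nthRootsFinset_one [DecidableEq K] (hk : 0 < k) (hq : IsPrimitiveRoot q k)
    (hw : w ∈ nthRootsFinset k (1 : K)) :
    Lagrange.nodalWeight (nthRootsFinset k (1 : K)) id w = w / k := by
  have hwk : w ^ (k - 1) * w = 1 := by
    rw [pow_sub_one_mul hk.ne', (mem_nthRootsFinset hk 1).1 hw]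
  have hderiv : (derivative (X ^ k - 1 : Polynomial K)).eval w = k * w ^ (k - 1) := by
    simp [Polynomial.derivative_X_pow]
  rw [Lagrange.nodalWeight_eq_eval_derivative_nodal hw, nodal_nthRootsFinset_one hk hq, id, hderiv,
    mul_inv, inv_eq_of_mul_eq_one_right hwk, mul_comm, div_eq_mul_inv]

theorem sum_nthRootsFinset_mul_eval_div_sub (hk : 0 < k) (hq : IsPrimitiveRoot q k)
    (hz : z ^ k ≠ 1) {P : Polynomial K} (hP : P.degree < k) :
    ∑ w ∈ nthRootsFinset k (1 : K), w * P.eval w / (z - w) = k * P.eval z / (z ^ k - 1) := by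
  classical
  have : NeZero k := ⟨hk.ne'⟩
  have hk' : (k : K) ≠ 0 := hq.neZero'.ne
  have hnode : ∀ w ∈ nthRootsFinset k (1 : K), z ≠ id w := by
    rintro w hw rfl
    exact hz ((mem_nthRootsFinset hk 1).1 hw)
  have hinterp : P.eval z =
      (z ^ k - 1) * ∑ w ∈ nthRootsFinset k (1 : K), w / k * (z - w)⁻¹ * P.eval w := by
    have hPk : P.degree < #(nthRootsFinset k (1 : K)) := by rwa [hq.card_nthRootsFinset]
    nth_rw 1 [Lagrange.eq_interpolate (Set.injOn_id _) hPk]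
    rw [Lagrange.eval_interpolate_not_at_node _ hnode, nodal_nthRootsFinset_one hk hq]
    congr 1
    · simp
    · exact sum_congr rfl fun w hw ↦ by rw [nodalWeight_nthRootsFinset_one hk hq hw, id]
  rw [hinterp, mul_left_comm, mul_div_cancel_left₀ _ (sub_ne_zero.2 hz), mul_sum]
  refine sum_congr rfl fun w _ ↦ ?_
  field_simp

theorem statement_10_general {j : ℕ} (hq : IsPrimitiveRoot q k) (hj : 1 ≤ j) (hjk : j ≤ k)
    (hz : z ^ k ≠ 1) :
    ∑ s ∈ Icc 1 k, q ^ (j * s) / (z - q ^ s) = k * z ^ (j - 1) / (z ^ k - 1) := by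
  have hdeg : (X ^ (j - 1) : Polynomial K).degree < k := by
    rw [Polynomial.degree_X_pow]
    exact_mod_cast (by lia : j - 1 < k)
  calc ∑ s ∈ Icc 1 k, q ^ (j * s) / (z - q ^ s)
      = ∑ s ∈ Icc 1 k, (q ^ s) ^ j / (z - q ^ s) := by simp only [← pow_mul']
    _ = ∑ w ∈ nthRootsFinset k (1 : K), w ^ j / (z - w) :=
        sum_Icc_pow_eq_sum_nthRootsFinset hq fun w ↦ w ^ j / (z - w)
    _ = k * z ^ (j - 1) / (z ^ k - 1) := by
        simpa only [Polynomial.eval_pow, Polynomial.eval_X, mul_pow_sub_one (by lia : j ≠ 0)] using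
          sum_nthRootsFinset_mul_eval_div_sub (hj.trans hjk) hq hz hdeg

end Field

/-- For `k ≥ j ≥ 1`, `q = e^{2πi/k}` and `z^k ≠ 1`,
`∑_{s=1}^{k} q^{js}/(z − q^s) = k z^{j−1}/(z^k − 1)`. -/
theorem statement_10 (k j : ℕ) (hj : 1 ≤ j) (hjk : j ≤ k) (z : ℂ) (hz : z ^ k ≠ 1) :
    ∑ s ∈ Finset.Icc 1 k,
        (Complex.exp (2 * Real.pi * Complex.I / k)) ^ (j * s) /
          (z - (Complex.exp (2 * Real.pi * Complex.I / k)) ^ s)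
      = k * z ^ (j - 1) / (z ^ k - 1) :=
  statement_10_general (isPrimitiveRoot_exp k (by lia)) hj hjk hz
end

section
/- Let M : [0,∞) → [2,∞) be a continuous increasing function and set R(t) = w_{M,log}(t). Then there exists a constant C > 0 such that M(R(t)) ≤ C t / log t for all t ≥ 2. -/
/-!
If `t = M_log(s)`, then `t = M(s) L` with `L = log(1 + M(s)) + log(1 + s)`, and both summands of
`log t = log M(s) + log L` are at most `L`; hence `M(s) log t ≤ 2 M(s) L = 2 t`. For `t < M_log(1)`
the weight is `1`, and `log t ≤ t` gives the bound with constant `M(1)`.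

The inverse of `M_log` takes values in `[1,∞)` on `[M_log(1),∞)`: being continuous and unbounded,
`M_log` maps `[1,∞)` onto an interval containing `[M_log(1),∞)`.
-/

open MeasureTheory Set Filter

/-- `M_log(s) = M(s)[log(1+M(s)) + log(1+s)]`. -/
noncomputable def Mlog (M : ℝ → ℝ) (s : ℝ) : ℝ :=
  M s * (Real.log (1 + M s) + Real.log (1 + s))

/-- The weight `w_{M,log}`: it equals `M_log^{−1}(t)` for `t ≥ M_log(1)` and `1` for
`0 ≤ t ≤ M_log(1)`; here `Minv` denotes the inverse function of `M_log`. -/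
noncomputable def wMlog (M Minv : ℝ → ℝ) (t : ℝ) : ℝ :=
  if Mlog M 1 ≤ t then Minv t else 1

lemma mul_log_mul_le_two_mul {x L : ℝ} (hx : 0 ≤ x) (hL : Real.log (1 + x) ≤ L) :
    x * Real.log (x * L) ≤ 2 * (x * L) := by
  rcases hx.eq_or_lt with rfl | hx
  · simp
  have hL0 : 0 < L := (Real.log_pos (by linarith)).trans_le hL
  have hlogx : Real.log x ≤ L := (Real.log_le_log hx (by linarith)).trans hL
  calc x * Real.log (x * L) = x * (Real.log x + Real.log L) := by
        rw [Real.log_mul hx.ne' hL0.ne']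
    _ ≤ x * (L + L) := by gcongr; exact Real.log_le_self hL0.le
    _ = 2 * (x * L) := by ring

section Mlog

variable {M : ℝ → ℝ}

lemma mul_log_Mlog_le_two_mul {s : ℝ} (hs : 0 ≤ s) (hM : 0 ≤ M s) :
    M s * Real.log (Mlog M s) ≤ 2 * Mlog M s :=
  mul_log_mul_le_two_mul hM (le_add_of_nonneg_right (Real.log_nonneg (by linarith)))

lemma continuousOn_Mlog {S : Set ℝ} (hM : ContinuousOn M S) (hM1 : ∀ s ∈ S, 1 + M s ≠ 0)
    (hS : ∀ s ∈ S, 1 + s ≠ 0) : ContinuousOn (Mlog M) S :=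
  hM.mul (((continuousOn_const.add hM).log hM1).add
    ((continuousOn_const.add continuousOn_id).log hS))

lemma tendsto_Mlog_atTop {c : ℝ} (hc : 0 < c) (hcM : ∀ᶠ s in atTop, c ≤ M s) :
    Tendsto (Mlog M) atTop atTop := by
  have hlog : Tendsto (fun s : ℝ => c * Real.log (1 + s)) atTop atTop :=
    (Real.tendsto_log_atTop.comp (tendsto_atTop_add_const_left _ 1 tendsto_id)).const_mul_atTop hc
  refine tendsto_atTop_mono' _ ?_ hlog
  filter_upwards [hcM, eventually_ge_atTop 0] with s hs hs0
  have hlogM : 0 ≤ Real.log (1 + M s) := Real.log_nonneg (by linarith)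
  have hlogs : 0 ≤ Real.log (1 + s) := Real.log_nonneg (by linarith)
  exact mul_le_mul hs (le_add_of_nonneg_left hlogM) hlogs (hc.le.trans hs)

lemma surjOn_Mlog {a c : ℝ} (ha : -1 < a) (hc : 0 < c) (hcM : ∀ s ∈ Ici a, c ≤ M s)
    (hM : ContinuousOn M (Ici a)) : SurjOn (Mlog M) (Ici a) (Ici (Mlog M a)) := by
  have hcont : ContinuousOn (Mlog M) (Ici a) :=
    continuousOn_Mlog hM (fun s hs => by linarith [hcM s hs])
      fun s hs => by linarith [mem_Ici.1 hs]
  exact intermediate_value_Ici hcont (tendsto_Mlog_atTop hc ((eventually_ge_atTop a).mono hcM))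

lemma comp_wMlog_le_mul_div_log {Minv : ℝ → ℝ} (hM : ∀ s ∈ Ici 1, 0 ≤ M s)
    (hmaps : MapsTo Minv (Ici (Mlog M 1)) (Ici 1))
    (hinv : RightInvOn Minv (Mlog M) (Ici (Mlog M 1))) {t : ℝ} (ht : 1 < t) :
    M (wMlog M Minv t) ≤ max 2 (M 1) * t / Real.log t := by
  rw [le_div_iff₀ (Real.log_pos ht), wMlog]
  split_ifs with h
  · have hs : 1 ≤ Minv t := hmaps h
    calc M (Minv t) * Real.log t ≤ 2 * t := by
          simpa only [hinv h] using mul_log_Mlog_le_two_mul (zero_le_one.trans hs) (hM _ hs)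
      _ ≤ max 2 (M 1) * t := by gcongr; exact le_max_left _ _
  · have hM1 : 0 ≤ M 1 := hM 1 self_mem_Ici
    calc M 1 * Real.log t ≤ M 1 * t := by gcongr; exact Real.log_le_self (by linarith)
      _ ≤ max 2 (M 1) * t := by gcongr; exact le_max_right _ _

theorem statement_18_general {Minv : ℝ → ℝ} {c : ℝ} (hc : 0 < c) (hcM : ∀ s ∈ Ici 1, c ≤ M s)
    (hM : ContinuousOn M (Ici 1)) (hinv : LeftInvOn Minv (Mlog M) (Ici 1)) {t : ℝ} (ht : 1 < t) :
    M (wMlog M Minv t) ≤ max 2 (M 1) * t / Real.log t := by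
  have hsurj : SurjOn (Mlog M) (Ici 1) (Ici (Mlog M 1)) :=
    surjOn_Mlog (by norm_num) hc hcM hM
  have hmaps : MapsTo Minv (Ici (Mlog M 1)) (Ici 1) := hinv.mapsTo hsurj
  have hright : RightInvOn Minv (Mlog M) (Ici (Mlog M 1)) :=
    hinv.rightInvOn_image.mono hsurj
  exact comp_wMlog_le_mul_div_log (fun s hs => hc.le.trans (hcM s hs)) hmaps hright ht

end Mlog

/-- For `R(t) = w_{M,log}(t)` one has `M(R(t)) ≤ C t / log t` for all `t ≥ 2`. -/
theorem statement_18
    (M : ℝ → ℝ) (hM2 : ∀ s : ℝ, 0 ≤ s → 2 ≤ M s)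
    (hMcont : ContinuousOn M (Ici 0)) (hMmono : MonotoneOn M (Ici 0))
    (Minv : ℝ → ℝ)
    (hMinv₁ : ∀ s : ℝ, 0 ≤ s → Minv (Mlog M s) = s)
    (hMinv₂ : ∀ t : ℝ, Mlog M 0 ≤ t → Mlog M (Minv t) = t) :
    ∃ C > (0:ℝ), ∀ t : ℝ, 2 ≤ t → M (wMlog M Minv t) ≤ C * t / Real.log t := by
  have h01 : Ici (1 : ℝ) ⊆ Ici 0 := Ici_subset_Ici.2 zero_le_one
  exact ⟨max 2 (M 1), by positivity, fun t ht => statement_18_general two_pos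
    (fun s hs => hM2 s (h01 hs)) (hMcont.mono h01) (fun s hs => hMinv₁ s (h01 hs)) (by linarith)⟩
end
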